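/- The map G defined by G(K) := K^⧫ ∩ T_{n,n}, where K^⧫ := {A ∈ ℝ^{n×n} : Ag >_L 0_n for all g ∈ K} and T_{n,n} is the set of full-rank row-stochastic n×n matrices, is a bijection from the family of coherent sets of desirable gambles in ℝ^n onto the family of L-credal sets, and its inverse is given by G⁻¹(𝒫) = 𝒫^◊ := {g ∈ ℝ^n : Ag >_L 0_n for all A ∈ 𝒫}. -/

import Mathlib

open Matrix BigOperators

/-- `g <_L f`: `g` is lexicographically less than `f`, i.e. at the first index where they
differ, `g` is smaller. -/
def LexLt {n : ℕ} (g f : Fin n → ℝ) : Prop :=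
  ∃ k : Fin n, (∀ i : Fin n, i < k → g i = f i) ∧ g k < f k

/-- `g ≤_L f`: `g <_L f` or `g = f`. -/
def LexLe {n : ℕ} (g f : Fin n → ℝ) : Prop := LexLt g f ∨ g = f

/-- `A >_L 0_n`: every column of `A` is lexicographically positive. -/
def ColsLexPos {n : ℕ} (A : Matrix (Fin n) (Fin n) ℝ) : Prop :=
  ∀ j : Fin n, LexLt 0 (fun i => A i j)

/-- A coherent set of desirable gambles on an `n`-element outcome space. -/
def CohDesirable {n : ℕ} (K : Set (Fin n → ℝ)) : Prop :=
  (∀ g ∈ K, ∀ f ∈ K, g + f ∈ K) ∧                      -- A1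
  (∀ g ∈ K, ∀ l : ℝ, 0 < l → l • g ∈ K) ∧              -- A2
  (∀ g : Fin n → ℝ, (∀ i, 0 ≤ g i) → g ≠ 0 → g ∈ K) ∧  -- A3
  (0 : Fin n → ℝ) ∉ K                                   -- A4

/-- `K^⧫`: the matrices mapping every element of `K` to a lexicographically positive
vector. -/
def matPolar {n : ℕ} (K : Set (Fin n → ℝ)) : Set (Matrix (Fin n) (Fin n) ℝ) :=
  {A | ∀ g ∈ K, LexLt 0 (A.mulVec g)}

/-- `𝒜^◊`: the vectors mapped by every matrix of `𝒜` to a lexicographically positive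
vector. -/
def vecPolar {n : ℕ} (S : Set (Matrix (Fin n) (Fin n) ℝ)) : Set (Fin n → ℝ) :=
  {g | ∀ A ∈ S, LexLt 0 (A.mulVec g)}

/-- `M^◊` for a single matrix: the gambles mapped to a lexicographically positive
vector. -/
def matDiamond {n : ℕ} (M : Matrix (Fin n) (Fin n) ℝ) : Set (Fin n → ℝ) :=
  {g | LexLt 0 (M.mulVec g)}

/-- A row-stochastic matrix: every row is a probability mass function. -/
def RowStochastic {n : ℕ} (P : Matrix (Fin n) (Fin n) ℝ) : Prop :=
  (∀ i j : Fin n, 0 ≤ P i j) ∧ ∀ i : Fin n, ∑ j, P i j = 1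

/-- `T_{n,n}`: the full-rank row-stochastic `n × n` matrices. -/
def fullRankStochastic (n : ℕ) : Set (Matrix (Fin n) (Fin n) ℝ) :=
  {P | RowStochastic P ∧ IsUnit P.det}

/-- An `L`-convex cone (omitting its apex) of matrices. -/
def LConvexCone {n : ℕ} (S : Set (Matrix (Fin n) (Fin n) ℝ)) : Prop :=
  ∃ (T : Type) (g : T → Fin n → ℝ),
    S = {A : Matrix (Fin n) (Fin n) ℝ | ∀ t : T, LexLt 0 (A.mulVec (g t))}

/-- An `L`-credal set: a nonempty intersection of an `L`-convex cone with `T_{n,n}`. -/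
def LCredal {n : ℕ} (P : Set (Matrix (Fin n) (Fin n) ℝ)) : Prop :=
  P.Nonempty ∧ ∃ S : Set (Matrix (Fin n) (Fin n) ℝ), LConvexCone S ∧
    P = S ∩ fullRankStochastic n

/-!
`K ∪ {0}` is a salient pointed cone containing the nonnegative orthant. A proper cone in a
finite-dimensional space lies in a closed half-space `0 ≤ φ`; intersecting a salient cone with
`ker φ` and recursing yields linear coordinates in which all its nonzero elements are
lexicographically positive. Adding large multiples of `φ` to the later coordinates makes them
nonnegative on the unit vectors, and rescaling the rows then gives a matrix in `K^⧫ ∩ T_{n,n}`.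

If `f ∉ K` and `f ≠ 0`, the cone generated by `K` and `-f` is still salient, so the same
construction gives a matrix in `K^⧫ ∩ T_{n,n}` mapping `f` to a lexicographically negative vector.
Hence `f ∉ (K^⧫ ∩ T_{n,n})^◊`.
-/

open Module Submodule

section Separation

theorem exists_mem_forall_exists_smul_add_mem {𝕜 V : Type*} [Field 𝕜] [LinearOrder 𝕜]
    [IsStrictOrderedRing 𝕜] [AddCommGroup V] [Module 𝕜 V] [FiniteDimensional 𝕜 V]
    {C : PointedCone 𝕜 V} (hC : span 𝕜 (C : Set V) = ⊤) :
    ∃ e ∈ C, ∀ y, ∃ t : 𝕜, t • e + y ∈ C := by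
  let b := Basis.ofSpan hC.ge
  have hb (i) : b i ∈ C := Basis.ofSpan_subset hC.ge (Set.mem_range_self i)
  have := FiniteDimensional.fintypeBasisIndex b
  refine ⟨∑ i, b i, sum_mem fun i _ => hb i, fun y => ?_⟩
  obtain ⟨t, ht⟩ := (Set.finite_range fun i => -b.repr y i).bddAbove
  have hcoord : t • ∑ i, b i + y = ∑ i, (t + b.repr y i) • b i := by
    simp only [add_smul, Finset.sum_add_distrib, Finset.smul_sum, b.sum_repr]
  refine ⟨t, hcoord ▸ sum_mem fun i _ => C.smul_mem ?_ (hb i)⟩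
  exact neg_le_iff_add_nonneg.mp (ht (Set.mem_range_self i))

variable {V : Type*} [AddCommGroup V] [Module ℝ V]

theorem exists_dual_apply_eq_one_forall_mem_nonneg {C : PointedCone ℝ V} {e : V}
    (he : ∀ y, ∃ t : ℝ, t • e + y ∈ C) (hneg : -e ∉ C) :
    ∃ φ : Dual ℝ V, φ e = 1 ∧ ∀ x ∈ C, 0 ≤ φ x := by
  have he0 : e ≠ 0 := by
    rintro rfl
    exact hneg (by simp)
  let ray : V →ₗ.[ℝ] ℝ := LinearPMap.mkSpanSingleton e (1 : ℝ) he0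
  have hray (t : ℝ) (ht : t • e ∈ ray.domain) : ray ⟨t • e, ht⟩ = t :=
    (LinearPMap.mkSpanSingleton'_apply e (1 : ℝ) _ t ht).trans (mul_one t)
  have hnonneg (x : ray.domain) (hxC : (x : V) ∈ C) : 0 ≤ ray x := by
    obtain ⟨x, hx⟩ := x
    obtain ⟨t, rfl⟩ := mem_span_singleton.mp hx
    rw [hray]
    by_contra! ht
    exact hneg ((C.smul_mem_iff (neg_pos.mpr ht)).mp (by simpa using hxC))
  have hdense (y : V) : ∃ x : ray.domain, (x : V) + y ∈ C := by
    obtain ⟨t, ht⟩ := he y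
    exact ⟨⟨t • e, mem_span_singleton.mpr ⟨t, rfl⟩⟩, ht⟩
  obtain ⟨φ, hφ, hφC⟩ := riesz_extension C ray hnonneg hdense
  refine ⟨φ, ?_, hφC⟩
  have he1 : (1 : ℝ) • e ∈ ray.domain := mem_span_singleton.mpr ⟨1, rfl⟩
  simpa only [one_smul] using (hφ ⟨_, he1⟩).trans (hray 1 he1)

theorem exists_dual_ne_zero_forall_mem_nonneg [FiniteDimensional ℝ V] {C : PointedCone ℝ V}
    (hC : C ≠ ⊤) : ∃ φ : Dual ℝ V, φ ≠ 0 ∧ ∀ x ∈ C, 0 ≤ φ x := by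
  by_cases hspan : span ℝ (C : Set V) = ⊤
  · obtain ⟨e, heC, he⟩ := exists_mem_forall_exists_smul_add_mem hspan
    have hneg : -e ∉ C := fun hneg => hC <| eq_top_iff'.mpr fun y => by
      obtain ⟨t, ht⟩ := he y
      have hcancel : -t • e ∈ C := by
        rcases le_total 0 t with h | h
        · simpa using C.smul_mem h hneg
        · exact C.smul_mem (neg_nonneg.mpr h) heC
      simpa using add_mem hcancel ht
    obtain ⟨φ, hφe, hφ⟩ := exists_dual_apply_eq_one_forall_mem_nonneg he hneg
    exact ⟨φ, fun h => by simp [h] at hφe, hφ⟩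
  · obtain ⟨φ, hφ, hker⟩ := exists_le_ker_of_lt_top _ (lt_top_iff_ne_top.mpr hspan)
    exact ⟨φ, hφ, fun x hx => (hker (subset_span hx)).ge⟩

end Separation

section SalientCone

theorem ne_top_of_salient {R V : Type*} [Semiring R] [PartialOrder R] [IsOrderedRing R]
    [AddCommGroup V] [Module R V] [Nontrivial V] {C : PointedCone R V}
    (hC : (C : ConvexCone R V).Salient) : C ≠ ⊤ := by
  rintro rfl
  obtain ⟨x, hx⟩ := exists_ne (0 : V)
  exact hC x trivial hx trivial

theorem salient_comap {R V W : Type*} [Semiring R] [PartialOrder R] [IsOrderedRing R]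
    [AddCommGroup V] [Module R V] [AddCommGroup W] [Module R W] {C : PointedCone R W}
    (hC : (C : ConvexCone R W).Salient) {f : V →ₗ[R] W} (hf : Function.Injective f) :
    (C.comap f : ConvexCone R V).Salient := fun x hx hx0 hneg =>
  hC (f x) hx ((map_ne_zero_iff f hf).mpr hx0) (map_neg f x ▸ hneg)

theorem salient_sup_hull_singleton_neg {𝕜 V : Type*} [Field 𝕜] [LinearOrder 𝕜]
    [IsStrictOrderedRing 𝕜] [AddCommGroup V] [Module 𝕜 V] {C : PointedCone 𝕜 V}
    (hC : (C : ConvexCone 𝕜 V).Salient) {f : V} (hf : f ∉ C) :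
    (C ⊔ PointedCone.hull 𝕜 {-f} : PointedCone 𝕜 V).toConvexCone.Salient := by
  intro x hx hx0 hneg
  obtain ⟨c, hc, _, hcf, rfl⟩ := mem_sup.mp hx
  obtain ⟨⟨l, hl⟩, rfl⟩ := mem_span_singleton.mp hcf
  obtain ⟨d, hd, _, hdf, hsum⟩ := mem_sup.mp hneg
  obtain ⟨⟨m, hm⟩, rfl⟩ := mem_span_singleton.mp hdf
  simp only [Nonneg.mk_smul] at hx0 hsum
  have hcd : c + d = (l + m) • f := by linear_combination (norm := module) hsum
  rcases (add_nonneg hl hm).eq_or_lt with hzero | hpos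
  · obtain ⟨rfl, rfl⟩ := (add_eq_zero_iff_of_nonneg hl hm).mp hzero.symm
    have hdc : d = -c := eq_neg_of_add_eq_zero_right (by simpa using hcd)
    exact hC c hc (by simpa using hx0) (hdc ▸ hd)
  · exact hf ((C.smul_mem_iff hpos).mp (hcd ▸ add_mem hc hd))

end SalientCone

section Lexicographic

theorem toLex_mul_pos {ι α : Type*} [LT ι] [MulZeroClass α] [Preorder α] [PosMulStrictMono α]
    {d v : ι → α} (hd : ∀ i, 0 < d i) (hv : 0 < toLex v) : 0 < toLex (d * v) := by
  obtain ⟨k, hzero, hpos⟩ := hv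
  refine ⟨k, fun i hi => ?_, mul_pos (hd k) hpos⟩
  have hvi : 0 = v i := hzero i hi
  exact (mul_eq_zero_of_right (d i) hvi.symm).symm

theorem toLex_vecCons_pos_iff {α : Type*} [Zero α] [LT α] {n : ℕ} {a : α} {v : Fin n → α} :
    0 < toLex (vecCons a v) ↔ 0 < a ∨ 0 = a ∧ 0 < toLex v := by
  rw [← toLex_zero, ← Matrix.cons_zero_zero]
  exact Fin.pi_lex_lt_cons_cons (· < ·)

theorem exists_extend_ker_nonneg {𝕜 V W : Type*} [Field 𝕜] [LinearOrder 𝕜] [IsStrictOrderedRing 𝕜]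
    [AddCommGroup V] [Module 𝕜 V] [AddCommGroup W] [PartialOrder W] [IsOrderedAddMonoid W]
    [IsDirectedOrder W] [Module 𝕜 W] [PosSMulMono 𝕜 W] {E : Set V} (hE : E.Finite)
    {φ : Dual 𝕜 V} (hφ : ∀ e ∈ E, 0 ≤ φ e)
    {ψ : LinearMap.ker φ →ₗ[𝕜] W} (hψ : ∀ e : LinearMap.ker φ, (e : V) ∈ E → 0 ≤ ψ e) :
    ∃ χ : V →ₗ[𝕜] W, (∀ w : LinearMap.ker φ, χ w = ψ w) ∧ ∀ e ∈ E, 0 ≤ χ e := by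
  obtain ⟨χ, rfl⟩ := LinearMap.exists_extend ψ
  obtain ⟨c, hc⟩ := (hE.image fun e => -((φ e)⁻¹ • χ e)).bddAbove
  refine ⟨χ + φ.smulRight c, fun w => by simp [LinearMap.mem_ker.mp w.2], fun e he => ?_⟩
  rcases (hφ e he).eq_or_lt with hzero | hpos
  · simpa [← hzero] using hψ ⟨e, hzero.symm⟩ he
  · have hle : 0 ≤ (φ e)⁻¹ • χ e + c := neg_le_iff_add_nonneg'.mp (hc (Set.mem_image_of_mem _ he))
    simpa [smul_add, smul_inv_smul₀ hpos.ne'] using smul_nonneg hpos.le hle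

theorem exists_injective_toLex_pos_nonneg {V : Type*} [AddCommGroup V] [Module ℝ V]
    [FiniteDimensional ℝ V] {n : ℕ} (hn : finrank ℝ V = n) {C : PointedCone ℝ V}
    (hC : (C : ConvexCone ℝ V).Salient) {E : Set V} (hE : E.Finite) (hEC : E ⊆ C) :
    ∃ Φ : V →ₗ[ℝ] Fin n → ℝ, Function.Injective Φ ∧
      (∀ x ∈ C, x ≠ 0 → 0 < toLex (Φ x)) ∧ ∀ e ∈ E, 0 ≤ Φ e := by
  induction n generalizing V with
  | zero =>
    have := finrank_zero_iff.mp hn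
    exact ⟨0, Function.injective_of_subsingleton _, fun x _ hx => absurd (Subsingleton.elim x 0) hx,
      fun _ _ => le_rfl⟩
  | succ n ih =>
    have : Nontrivial V := nontrivial_of_finrank_eq_succ hn
    obtain ⟨φ, hφ0, hφ⟩ := exists_dual_ne_zero_forall_mem_nonneg (ne_top_of_salient hC)
    have hker : finrank ℝ (LinearMap.ker φ) = n := by
      have := Dual.finrank_ker_add_one_of_ne_zero hφ0
      lia
    obtain ⟨ψ, hψinj, hψpos, hψE⟩ := ih hker
      (salient_comap hC (LinearMap.ker φ).injective_subtype)
      (hE.preimage Subtype.val_injective.injOn) (fun _ hx => hEC hx)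
    obtain ⟨χ, hχ, hχE⟩ := exists_extend_ker_nonneg hE (fun e he => hφ e (hEC he)) hψE
    refine ⟨φ.vecCons χ, ?_, fun x hx hx0 => ?_, fun e he => ?_⟩
    · refine (injective_iff_map_eq_zero _).mpr fun x hx => ?_
      obtain ⟨hφx, hχx⟩ := cons_eq_zero_iff.mp hx
      have hψx : ψ ⟨x, hφx⟩ = 0 := hχ ⟨x, hφx⟩ ▸ hχx
      exact congrArg Subtype.val ((map_eq_zero_iff ψ hψinj).mp hψx)
    · refine toLex_vecCons_pos_iff.mpr ((hφ x hx).lt_or_eq.imp_right fun hzero => ⟨hzero, ?_⟩)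
      have hψx := hψpos ⟨x, hzero.symm⟩ hx (Subtype.coe_ne_coe.mp hx0)
      rwa [← hχ] at hψx
    · exact Fin.cases (hφ e (hEC he)) (hχE e he)

end Lexicographic

section Stochastic

variable {n : ℕ}

theorem lexLt_iff_toLex_lt {g f : Fin n → ℝ} : LexLt g f ↔ toLex g < toLex f := Iff.rfl

theorem exists_pos_diagonal_mul_mem_fullRankStochastic {A : Matrix (Fin n) (Fin n) ℝ}
    (hA : ∀ i j, 0 ≤ A i j) (hdet : IsUnit A.det) :
    ∃ d : Fin n → ℝ, (∀ i, 0 < d i) ∧ diagonal d * A ∈ fullRankStochastic n := by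
  have hsum (i) : 0 < ∑ j, A i j := by
    refine Finset.sum_pos_iff_of_nonneg (fun j _ => hA i j) |>.mpr ?_
    by_contra! hrow
    exact hdet.ne_zero (det_eq_zero_of_row_eq_zero i fun j =>
      (hrow j (Finset.mem_univ j)).antisymm (hA i j))
  refine ⟨fun i => (∑ j, A i j)⁻¹, fun i => inv_pos.mpr (hsum i), ⟨fun i j => ?_, fun i => ?_⟩, ?_⟩
  · rw [diagonal_mul]
    exact mul_nonneg (inv_pos.mpr (hsum i)).le (hA i j)
  · simp only [diagonal_mul, ← Finset.mul_sum]
    exact inv_mul_cancel₀ (hsum i).ne'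
  · rw [det_mul, det_diagonal]
    exact (isUnit_iff_ne_zero.mpr
      (Finset.prod_ne_zero_iff.mpr fun i _ => (inv_pos.mpr (hsum i)).ne')).mul hdet

theorem exists_mem_fullRankStochastic_lexLt_mulVec {C : PointedCone ℝ (Fin n → ℝ)}
    (hC : (C : ConvexCone ℝ (Fin n → ℝ)).Salient) (hpos : PointedCone.positive ℝ (Fin n → ℝ) ≤ C) :
    ∃ A ∈ fullRankStochastic n, ∀ g ∈ C, g ≠ 0 → LexLt 0 (A *ᵥ g) := by
  obtain ⟨Φ, hinj, hlex, hunit⟩ := exists_injective_toLex_pos_nonneg (finrank_fin_fun ℝ) hC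
    (Set.finite_range fun j : Fin n => (Pi.single j 1 : Fin n → ℝ))
    (Set.range_subset_iff.mpr fun j => hpos (Pi.single_nonneg.mpr zero_le_one))
  have hmulVec (g) : Φ.toMatrix' *ᵥ g = Φ g := Φ.toMatrix'_mulVec g
  have hdet : IsUnit Φ.toMatrix'.det := by
    rw [← isUnit_iff_isUnit_det, ← mulVec_injective_iff_isUnit]
    simpa only [funext hmulVec] using hinj
  obtain ⟨d, hd, hdA⟩ := exists_pos_diagonal_mul_mem_fullRankStochastic
    (fun i j => by simpa [LinearMap.toMatrix'_apply] using hunit _ (Set.mem_range_self j) i) hdet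
  refine ⟨_, hdA, fun g hg hg0 => ?_⟩
  have hscale : (diagonal d * Φ.toMatrix') *ᵥ g = d * Φ g := by
    ext i
    rw [← mulVec_mulVec, mulVec_diagonal, hmulVec, Pi.mul_apply]
  rw [hscale]
  exact toLex_mul_pos hd (hlex g hg hg0)

end Stochastic

section Polarity

variable {n : ℕ} {K : Set (Fin n → ℝ)} {P S : Set (Matrix (Fin n) (Fin n) ℝ)}

theorem subset_matPolar_iff : S ⊆ matPolar K ↔ K ⊆ vecPolar S :=
  ⟨fun h _ hg _ hA => h hA _ hg, fun h _ hA _ hg => h hg _ hA⟩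

theorem matPolar_anti {L : Set (Fin n → ℝ)} (h : K ⊆ L) : matPolar L ⊆ matPolar K :=
  fun _ hA g hg => hA g (h hg)

theorem zero_notMem_vecPolar (hP : P.Nonempty) : 0 ∉ vecPolar P := by
  obtain ⟨A, hA⟩ := hP
  intro h
  exact lt_irrefl _ (lexLt_iff_toLex_lt.mp (by simpa using h A hA))

theorem cohDesirable_vecPolar (hne : P.Nonempty) (hP : P ⊆ fullRankStochastic n) :
    CohDesirable (vecPolar P) := by
  refine ⟨fun g hg f hf A hA => ?_, fun g hg l hl A hA => ?_, fun g hg hg0 A hA => ?_,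
    zero_notMem_vecPolar hne⟩
  · rw [mulVec_add]
    exact add_pos (lexLt_iff_toLex_lt.mp (hg A hA)) (hf A hA)
  · rw [mulVec_smul]
    exact toLex_mul_pos (fun _ => hl) (hg A hA)
  · obtain ⟨hstoch, hdet⟩ := hP hA
    have hnonneg : 0 ≤ A *ᵥ g :=
      nonneg_mulVec_of_mem_rowStochastic (mem_rowStochastic_iff_sum.mpr hstoch) hg
    have hinj := mulVec_injective_iff_isUnit.mpr ((isUnit_iff_isUnit_det A).mpr hdet)
    have hne : A *ᵥ g ≠ 0 := fun h => hg0 (hinj (h.trans (mulVec_zero A).symm))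
    exact Pi.toLex_strictMono (hnonneg.lt_of_ne' hne)

theorem lCredal_iff_exists_matPolar :
    LCredal P ↔ P.Nonempty ∧ ∃ K, P = matPolar K ∩ fullRankStochastic n := by
  refine and_congr_right fun _ => ⟨?_, ?_⟩
  · rintro ⟨_, ⟨T, g, rfl⟩, rfl⟩
    exact ⟨Set.range g, by simp [matPolar]⟩
  · rintro ⟨K, rfl⟩
    exact ⟨matPolar K, ⟨K, Subtype.val, by simp [matPolar]⟩, rfl⟩

theorem matPolar_vecPolar_inter_fullRankStochastic (hP : LCredal P) :
    matPolar (vecPolar P) ∩ fullRankStochastic n = P := by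
  obtain ⟨-, K, hPK⟩ := lCredal_iff_exists_matPolar.mp hP
  obtain ⟨hpolar, hstoch⟩ := Set.subset_inter_iff.mp hPK.le
  refine Set.Subset.antisymm ?_ (Set.subset_inter (subset_matPolar_iff.mpr subset_rfl) hstoch)
  conv_rhs => rw [hPK]
  exact Set.inter_subset_inter_left _ (matPolar_anti (subset_matPolar_iff.mp hpolar))

end Polarity

namespace CohDesirable

variable {n : ℕ} {K : Set (Fin n → ℝ)}

/-- The pointed cone `K ∪ {0}` of a coherent set `K`; adding the apex makes the library's
`PointedCone` apply. -/
def cone (hK : CohDesirable K) : PointedCone ℝ (Fin n → ℝ) where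
  carrier := insert 0 K
  zero_mem' := Set.mem_insert 0 K
  add_mem' := by
    rintro g f (rfl | hg) (rfl | hf)
    · simp
    · simpa using Or.inr hf
    · simpa using Or.inr hg
    · exact Or.inr (hK.1 g hg f hf)
  smul_mem' := by
    rintro ⟨l, hl⟩ g (rfl | hg)
    · simp
    · rcases hl.eq_or_lt with rfl | hl
      · simp
      · exact Or.inr (hK.2.1 g hg l hl)

theorem mem_cone (hK : CohDesirable K) {g : Fin n → ℝ} : g ∈ hK.cone ↔ g = 0 ∨ g ∈ K := Iff.rfl

theorem salient_cone (hK : CohDesirable K) :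
    (hK.cone : ConvexCone ℝ (Fin n → ℝ)).Salient := by
  intro g hg hg0 hneg
  have hgK := (hK.mem_cone.mp hg).resolve_left hg0
  have hnegK := (hK.mem_cone.mp hneg).resolve_left (neg_ne_zero.mpr hg0)
  exact hK.2.2.2 (by simpa using hK.1 g hgK (-g) hnegK)

theorem positive_le_cone (hK : CohDesirable K) :
    PointedCone.positive ℝ (Fin n → ℝ) ≤ hK.cone := fun g hg =>
  hK.mem_cone.mpr (or_iff_not_imp_left.mpr (hK.2.2.1 g hg))

theorem matPolar_inter_fullRankStochastic_nonempty (hK : CohDesirable K) :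
    (matPolar K ∩ fullRankStochastic n).Nonempty := by
  obtain ⟨A, hA, hlex⟩ :=
    exists_mem_fullRankStochastic_lexLt_mulVec hK.salient_cone hK.positive_le_cone
  exact ⟨A, fun g hg => hlex g (hK.mem_cone.mpr (Or.inr hg)) (ne_of_mem_of_not_mem hg hK.2.2.2), hA⟩

theorem vecPolar_matPolar_inter_fullRankStochastic (hK : CohDesirable K) :
    vecPolar (matPolar K ∩ fullRankStochastic n) = K := by
  refine Set.Subset.antisymm (fun f hf => ?_) (subset_matPolar_iff.mp Set.inter_subset_left)
  by_contra hfK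
  have hf0 : f ≠ 0 := ne_of_mem_of_not_mem hf
    (zero_notMem_vecPolar hK.matPolar_inter_fullRankStochastic_nonempty)
  have hfcone : f ∉ hK.cone := fun h => (hK.mem_cone.mp h).elim hf0 hfK
  obtain ⟨A, hA, hlex⟩ := exists_mem_fullRankStochastic_lexLt_mulVec
    (salient_sup_hull_singleton_neg hK.salient_cone hfcone) (hK.positive_le_cone.trans le_sup_left)
  have hAK : A ∈ matPolar K := fun g hg =>
    hlex g (le_sup_left (a := hK.cone) (Or.inr hg)) (ne_of_mem_of_not_mem hg hK.2.2.2)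
  have hneg : LexLt 0 (A *ᵥ -f) :=
    hlex (-f) (mem_sup_right (mem_span_singleton_self _)) (neg_ne_zero.mpr hf0)
  rw [mulVec_neg, lexLt_iff_toLex_lt, toLex_zero, toLex_neg, neg_pos] at hneg
  exact lt_asymm hneg (hf A ⟨hAK, hA⟩)

end CohDesirable

/-- The map `G : K ↦ K^⧫ ∩ T_{n,n}` is a bijection from coherent sets of desirable
gambles onto `L`-credal sets, with inverse `𝒫 ↦ 𝒫^◊`. -/
theorem lexCredal_bijection (n : ℕ) :
    (∀ K : Set (Fin n → ℝ), CohDesirable K →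
      LCredal (matPolar K ∩ fullRankStochastic n)) ∧
    (∀ P : Set (Matrix (Fin n) (Fin n) ℝ), LCredal P → CohDesirable (vecPolar P)) ∧
    (∀ K : Set (Fin n → ℝ), CohDesirable K →
      vecPolar (matPolar K ∩ fullRankStochastic n) = K) ∧
    (∀ P : Set (Matrix (Fin n) (Fin n) ℝ), LCredal P →
      matPolar (vecPolar P) ∩ fullRankStochastic n = P) := by
  refine ⟨fun K hK => ?_, fun P hP => ?_,
    fun K hK => hK.vecPolar_matPolar_inter_fullRankStochastic,
    fun P hP => matPolar_vecPolar_inter_fullRankStochastic hP⟩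
  · exact lCredal_iff_exists_matPolar.mpr
      ⟨hK.matPolar_inter_fullRankStochastic_nonempty, K, rfl⟩
  · obtain ⟨hne, K, rfl⟩ := lCredal_iff_exists_matPolar.mp hP
    exact cohDesirable_vecPolar hne Set.inter_subset_right
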